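/- arXiv:1710.06273 — 2 statements merged into one kernel-verified Lean document; each statement's English description precedes it below -/
import Mathlib

section
/- Fix p ∈ (1,∞) and μ, λ > 0. Let f⁻ be the convex closure of F: for η ∈ [0,1]^V, f⁻(η) = inf{ Σ_{S⊆V} α_S F(S) : α_S ≥ 0, Σ_{S⊆V} α_S = 1, Σ_{S⊆V} α_S 1_S = η }. Define Θ_p(w) = inf{ λ Σ_{j : w_j ≠ 0} |w_j|^p / η_j^{p−1} + μ f⁻(η) : η ∈ [0,1]^V with η_j > 0 whenever w_j ≠ 0 }. Then Θ_p is the convex envelope on ℝ^V of F_{μλ}(w) = μ F(supp(w)) + λ ‖w‖_p^p; precisely: (i) Θ_p is convex on ℝ^V; (ii) Θ_p(w) ≤ F_{μλ}(w) for all w ∈ ℝ^V; (iii) every convex function g : ℝ^V → ℝ with g(w) ≤ F_{μλ}(w) for all w satisfies g(w) ≤ Θ_p(w) for all w. -/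
open scoped BigOperators

/-- The convex closure `f⁻` of a set function `F`, defined on `[0,1]^V`. -/
noncomputable def convClosure {V : Type*} [Fintype V] [DecidableEq V]
    (F : Finset V → ℝ) (η : V → ℝ) : ℝ :=
  sInf { t : ℝ | ∃ α : Finset V → ℝ,
    (∀ S, 0 ≤ α S) ∧ (∑ S : Finset V, α S) = 1 ∧
    (∀ i : V, (∑ S : Finset V, if i ∈ S then α S else 0) = η i) ∧
    t = ∑ S : Finset V, α S * F S }

/-- The non-homogeneous `ℓ_p`-relaxation `Θ_p`. -/
noncomputable def thetaP {V : Type*} [Fintype V] [DecidableEq V]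
    (F : Finset V → ℝ) (p lam mu : ℝ) (w : V → ℝ) : ℝ :=
  sInf { t : ℝ | ∃ η : V → ℝ,
    (∀ i, 0 ≤ η i ∧ η i ≤ 1) ∧ (∀ i, w i ≠ 0 → 0 < η i) ∧
    t = lam * (∑ i ∈ Finset.univ.filter (fun i => w i ≠ 0), |w i| ^ p / (η i) ^ (p - 1))
        + mu * convClosure F η }

/-!
Merging the two infima, `Θ_p(w)` is the infimum, over the probability distributions `α` on the
subsets of `V` with marginals `η`, of `λ ∑ i, η_i |w_i / η_i| ^ p + μ ∑ S, α_S F(S)`. The first term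
is a sum of perspectives of the convex function `|·| ^ p`, so this objective is jointly convex in
`(w, α)`, and partial minimization over `α` preserves convexity. The point mass at the support of
`w` gives the upper bound. For a convex minorant `g`, put `x_i = w_i / η_i`; then `w` is the mean of
the restrictions of `x` to a random set `S` with law `α`, and Jensen's inequality bounds `g(w)`.
When `x` has zeros, such a restriction may have a support smaller than `S`, with a larger value of
`F`; continuity of `g` (automatic in finite dimension) still bounds `g` there by
`μ F(S) + λ ‖·‖_p^p`.
-/

section Convexity

variable {𝕜 E G : Type*} [Field 𝕜] [LinearOrder 𝕜]
  [AddCommGroup E] [AddCommGroup G]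

variable (𝕜 E) in
/-- The pairs `(x, y)` with `0 ≤ y` on which the perspective of a convex function is convex:
the only such pair with `y = 0` is the origin. -/
def perspectiveDomain : Set (E × 𝕜) := {q | 0 ≤ q.2 ∧ (q.2 = 0 → q.1 = 0)}

theorem mem_perspectiveDomain_iff {q : E × 𝕜} :
    q ∈ perspectiveDomain 𝕜 E ↔ 0 ≤ q.2 ∧ (q.1 ≠ 0 → 0 < q.2) :=
  and_congr_right fun h => by rw [h.lt_iff_ne', not_imp_not]

variable [Module 𝕜 E] [Module 𝕜 G]

/-- The perspective `(x, y) ↦ y f(x / y)` of a function `f`, which turns convexity of `f` into joint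
convexity in `(x, y)`; it takes the value `0` at `y = 0`. -/
def perspective (f : E → 𝕜) (q : E × 𝕜) : 𝕜 := q.2 * f (q.2⁻¹ • q.1)

theorem smul_inv_smul_of_mem_perspectiveDomain {q : E × 𝕜} (hq : q ∈ perspectiveDomain 𝕜 E) :
    q.2 • q.2⁻¹ • q.1 = q.1 := by
  by_cases h : q.2 = 0
  · simp [hq.2 h]
  · exact smul_inv_smul₀ h q.1

variable [IsStrictOrderedRing 𝕜]

theorem convex_perspectiveDomain : Convex 𝕜 (perspectiveDomain 𝕜 E) := by
  rintro ⟨x₁, y₁⟩ ⟨hy₁, hx₁⟩ ⟨x₂, y₂⟩ ⟨hy₂, hx₂⟩ a b ha hb -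
  refine ⟨add_nonneg (mul_nonneg ha hy₁) (mul_nonneg hb hy₂), fun h => ?_⟩
  obtain ⟨h₁, h₂⟩ := (add_eq_zero_iff_of_nonneg (mul_nonneg ha hy₁) (mul_nonneg hb hy₂)).1 h
  have smul_eq_zero_of_mul {c y : 𝕜} {x : E} (hcy : c * y = 0) (hx : y = 0 → x = 0) :
      c • x = 0 := (mul_eq_zero.1 hcy).elim (by simp +contextual) fun hy => by simp [hx hy]
  simp [smul_eq_zero_of_mul h₁ hx₁, smul_eq_zero_of_mul h₂ hx₂]

theorem convexOn_perspective {f : E → 𝕜} (hf : ConvexOn 𝕜 Set.univ f) :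
    ConvexOn 𝕜 (perspectiveDomain 𝕜 E) (perspective f) := by
  refine ⟨convex_perspectiveDomain, fun q₁ h₁ q₂ h₂ a b ha hb _ => ?_⟩
  set y := a * q₁.2 + b * q₂.2 with hy
  have hay : 0 ≤ a * q₁.2 := mul_nonneg ha h₁.1
  have hby : 0 ≤ b * q₂.2 := mul_nonneg hb h₂.1
  change y * f (y⁻¹ • (a • q₁.1 + b • q₂.1)) ≤
    a * (q₁.2 * f (q₁.2⁻¹ • q₁.1)) + b * (q₂.2 * f (q₂.2⁻¹ • q₂.1))
  rcases (add_nonneg hay hby).eq_or_lt with h0 | hpos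
  · obtain ⟨ha0, hb0⟩ := (add_eq_zero_iff_of_nonneg hay hby).1 h0.symm
    simp [← mul_assoc, hy, ha0, hb0]
  · have hmean : y⁻¹ • (a • q₁.1 + b • q₂.1) =
        (y⁻¹ * (a * q₁.2)) • q₁.2⁻¹ • q₁.1 + (y⁻¹ * (b * q₂.2)) • q₂.2⁻¹ • q₂.1 := by
      simp only [mul_smul, smul_add, smul_inv_smul_of_mem_perspectiveDomain h₁,
        smul_inv_smul_of_mem_perspectiveDomain h₂]
    have hjensen := hf.2 (Set.mem_univ (q₁.2⁻¹ • q₁.1)) (Set.mem_univ (q₂.2⁻¹ • q₂.1))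
      (mul_nonneg (inv_nonneg.2 hpos.le) hay) (mul_nonneg (inv_nonneg.2 hpos.le) hby)
      (by rw [← mul_add, inv_mul_cancel₀ hpos.ne'])
    rw [hmean]
    refine (mul_le_mul_of_nonneg_left hjensen hpos.le).trans_eq ?_
    simp only [smul_eq_mul, mul_add, ← mul_assoc, mul_inv_cancel₀ hpos.ne', one_mul]

theorem convexOn_of_isGLB_fiber {C : Set (E × G)} {c : E × G → 𝕜} {Θ : E → 𝕜}
    (hc : ConvexOn 𝕜 C c)
    (hΘ : ∀ x, IsGLB ((fun y => c (x, y)) '' {y | (x, y) ∈ C}) (Θ x)) :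
    ConvexOn 𝕜 Set.univ Θ := by
  refine ⟨convex_univ, fun x₁ _ x₂ _ a b ha hb hab => ?_⟩
  refine (le_isGLB_iff (((hΘ x₁).mul_left ha).add ((hΘ x₂).mul_left hb))).2 ?_
  rintro _ ⟨_, ⟨_, ⟨y₁, hy₁, rfl⟩, rfl⟩, _, ⟨_, ⟨y₂, hy₂, rfl⟩, rfl⟩, rfl⟩
  exact ((hΘ _).1 ⟨a • y₁ + b • y₂, hc.1 hy₁ hy₂ ha hb hab, rfl⟩).trans
    (hc.2 hy₁ hy₂ ha hb hab)

theorem convexOn_sum {ι : Type*} {s : Set E} {f : ι → E → 𝕜} (t : Finset ι) (hs : Convex 𝕜 s)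
    (hf : ∀ i ∈ t, ConvexOn 𝕜 s (f i)) : ConvexOn 𝕜 s fun x => ∑ i ∈ t, f i x := by
  simp only [← Finset.sum_apply]
  exact Finset.sum_induction f (ConvexOn 𝕜 s) (fun _ _ => ConvexOn.add) (convexOn_const 0 hs) hf

end Convexity

theorem convexOn_norm_rpow {E : Type*} [SeminormedAddCommGroup E] [NormedSpace ℝ E] {p : ℝ}
    (hp : 1 ≤ p) : ConvexOn ℝ Set.univ fun x : E => ‖x‖ ^ p :=
  ⟨convex_univ, fun x _ y _ _ _ ha hb hab =>
    (Real.rpow_le_rpow (norm_nonneg _)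
      (convexOn_univ_norm.2 (Set.mem_univ x) (Set.mem_univ y) ha hb hab) (by positivity)).trans
      ((convexOn_rpow hp).2 (norm_nonneg x) (norm_nonneg y) ha hb hab)⟩

theorem perspective_abs_rpow_eq_div {p x y : ℝ} (hy : 0 < y) :
    perspective (fun z : ℝ => |z| ^ p) (x, y) = |x| ^ p / y ^ (p - 1) := by
  rw [perspective, smul_eq_mul, inv_mul_eq_div, abs_div, abs_of_pos hy,
    Real.div_rpow (abs_nonneg x) hy.le, Real.rpow_sub_one hy.ne']
  field_simp

theorem exists_le_sum_mul_of_mem_stdSimplex {ι : Type*} [Fintype ι] (f : ι → ℝ) :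
    ∃ m, ∀ α ∈ stdSimplex ℝ ι, m ≤ ∑ i, α i * f i := by
  obtain ⟨m, hm⟩ := (Set.finite_range f).bddBelow
  refine ⟨m, fun α hα => ?_⟩
  calc m = ∑ i, α i * m := by rw [← Finset.sum_mul, hα.2, one_mul]
    _ ≤ ∑ i, α i * f i := Finset.sum_le_sum fun i _ =>
      mul_le_mul_of_nonneg_left (hm ⟨i, rfl⟩) (hα.1 i)

theorem sum_filter_eq_sum_perspective {V : Type*} [Fintype V] {p : ℝ} (hp : p ≠ 0)
    {w η : V → ℝ} (hw : ∀ i, w i ≠ 0 → 0 < η i) :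
    ∑ i ∈ Finset.univ.filter (fun i => w i ≠ 0), |w i| ^ p / η i ^ (p - 1) =
      ∑ i, perspective (fun z : ℝ => |z| ^ p) (w i, η i) := by
  rw [Finset.sum_filter]
  refine Finset.sum_congr rfl fun i _ => ?_
  split_ifs with hi
  · exact (perspective_abs_rpow_eq_div (hw i hi)).symm
  · simp [perspective, not_not.1 hi, Real.zero_rpow hp]

/-- For fixed `S`, the vectors supported exactly by `S` are dense among those supported in `S`. -/
theorem apply_piecewise_le_of_le_add_support {V : Type*} [Fintype V] [DecidableEq V]
    {g φ : (V → ℝ) → ℝ} {c : Finset V → ℝ} (hg : Continuous g) (hφ : Continuous φ)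
    (h : ∀ w, g w ≤ c (Finset.univ.filter fun i => w i ≠ 0) + φ w) (S : Finset V) (x : V → ℝ) :
    g (S.piecewise x 0) ≤ c S + φ (S.piecewise x 0) := by
  have hdense : Dense {x : V → ℝ | ∀ i, x i ≠ 0} := by
    simpa [Set.pi] using dense_pi Set.univ fun (_ : V) _ => dense_compl_singleton (0 : ℝ)
  have hcont : Continuous fun x : V → ℝ => S.piecewise x 0 := by
    refine continuous_pi fun i => ?_
    simp only [Finset.piecewise]
    split_ifs
    · exact continuous_apply i
    · exact continuous_const
  have hclosed : IsClosed {x : V → ℝ | g (S.piecewise x 0) ≤ c S + φ (S.piecewise x 0)} :=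
    isClosed_le (hg.comp hcont) (continuous_const.add (hφ.comp hcont))
  refine hclosed.closure_subset_iff.2 (fun y hy => ?_) (hdense x)
  have hsupp : (Finset.univ.filter fun i => S.piecewise y 0 i ≠ 0) = S := by
    ext i
    by_cases hi : i ∈ S <;> simp [hi, hy i]
  have hle := h (S.piecewise y 0)
  rwa [hsupp] at hle

theorem range_piecewise_one_zero {V : Type*} [Finite V] [DecidableEq V] :
    Set.range (fun S : Finset V => S.piecewise (1 : V → ℝ) 0) = Set.univ.pi fun _ => {0, 1} := by
  refine Set.Subset.antisymm ?_ fun x hx => ⟨(Set.toFinite {i | x i = 1}).toFinset, ?_⟩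
  · rintro _ ⟨S, rfl⟩ i -
    by_cases hi : i ∈ S <;> simp [hi]
  · ext i
    rcases hx i trivial with h | h <;> simp_all [Finset.piecewise]

section SetMixtures

variable {V : Type*} [Fintype V] [DecidableEq V]

/-- The vector `∑ S, α S • 1_S` of inclusion weights of a weighting `α` of the subsets of `V`. -/
def marginal : (Finset V → ℝ) →ₗ[ℝ] V → ℝ :=
  Fintype.linearCombination ℝ fun S : Finset V => S.piecewise 1 0

theorem marginal_apply (α : Finset V → ℝ) (i : V) :
    marginal α i = ∑ S, if i ∈ S then α S else 0 := by
  simp [marginal, Fintype.linearCombination_apply, Finset.sum_apply, Finset.piecewise]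

theorem marginal_single (S : Finset V) :
    marginal (Pi.single S 1) = S.piecewise (1 : V → ℝ) 0 := by
  simp [marginal]

theorem image_marginal_stdSimplex :
    marginal '' stdSimplex ℝ (Finset V) = Set.Icc (0 : V → ℝ) 1 := by
  rw [← convexHull_rangle_single_eq_stdSimplex, LinearMap.image_convexHull, ← Set.range_comp,
    ← Set.pi_univ_Icc]
  simp only [Function.comp_def, marginal_single]
  rw [range_piecewise_one_zero, convexHull_pi]
  simp [convexHull_pair, segment_eq_Icc]

theorem marginal_mul_eq_sum_smul_piecewise (α : Finset V → ℝ) (x : V → ℝ) :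
    marginal α * x = ∑ S, α S • S.piecewise x 0 := by
  ext i
  simp [marginal_apply, Finset.sum_mul, Finset.piecewise]

theorem sum_mul_sum_eq_sum_marginal_mul (α : Finset V → ℝ) (c : V → ℝ) :
    ∑ S, α S * ∑ i ∈ S, c i = ∑ i, marginal α i * c i := by
  simp only [marginal_apply, Finset.sum_mul, Finset.mul_sum, ite_mul, zero_mul]
  rw [Finset.sum_comm]
  simp

variable {F : Finset V → ℝ} {p lam mu : ℝ}

theorem isGLB_convClosure (F : Finset V → ℝ) {η : V → ℝ} (hη : η ∈ Set.Icc 0 1) :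
    IsGLB ((fun α => ∑ S, α S * F S) '' {α ∈ stdSimplex ℝ (Finset V) | marginal α = η})
      (convClosure F η) := by
  have hset : {t : ℝ | ∃ α : Finset V → ℝ, (∀ S, 0 ≤ α S) ∧ (∑ S, α S) = 1 ∧
      (∀ i, (∑ S : Finset V, if i ∈ S then α S else 0) = η i) ∧ t = ∑ S, α S * F S} =
      (fun α => ∑ S, α S * F S) '' {α ∈ stdSimplex ℝ (Finset V) | marginal α = η} := by
    ext t
    simp only [← marginal_apply, ← funext_iff, Set.mem_image, Set.mem_ofPred_eq, stdSimplex,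
      and_assoc, eq_comm (a := t)]
  rw [convClosure, hset]
  rw [← image_marginal_stdSimplex] at hη
  obtain ⟨m, hm⟩ := exists_le_sum_mul_of_mem_stdSimplex F
  exact isGLB_csInf (Set.Nonempty.image _ hη) ⟨m, Set.forall_mem_image.2 fun α hα => hm α hα.1⟩

theorem le_add_mul_convClosure_iff {η : V → ℝ} (hη : η ∈ Set.Icc 0 1) (hmu : 0 ≤ mu) {b c : ℝ} :
    c ≤ b + mu * convClosure F η ↔
      ∀ α ∈ stdSimplex ℝ (Finset V), marginal α = η → c ≤ b + mu * ∑ S, α S * F S := by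
  rw [← sub_le_iff_le_add', le_isGLB_iff ((isGLB_convClosure F hη).mul_left hmu)]
  simp only [mem_lowerBounds, Set.forall_mem_image, Set.mem_ofPred_eq, and_imp, sub_le_iff_le_add']

/-- The linear map `(w, α) ↦ (w_i, η_i)`, where `η` is the vector of marginals of `α`; the objective
of `Θ_p` depends on `w` only through these pairs. -/
def mixtureCoord (i : V) : (V → ℝ) × (Finset V → ℝ) →ₗ[ℝ] ℝ × ℝ :=
  (LinearMap.proj i).prodMap (LinearMap.proj i ∘ₗ marginal)

variable (V) in
/-- The pairs `(w, α)` of a vector and a probability distribution on the subsets of `V` whose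
marginals are positive on the support of `w`. -/
def mixtureDomain : Set ((V → ℝ) × (Finset V → ℝ)) :=
  {q | q.2 ∈ stdSimplex ℝ (Finset V) ∧ ∀ i, mixtureCoord i q ∈ perspectiveDomain ℝ ℝ}

/-- The objective defining `Θ_p`, in terms of a probability distribution `α` on the subsets of `V`
instead of its marginals `η`: the infima in `Θ_p` and in `f⁻` are merged into one. -/
noncomputable def mixtureCost (F : Finset V → ℝ) (p lam mu : ℝ)
    (q : (V → ℝ) × (Finset V → ℝ)) : ℝ :=
  lam * ∑ i, perspective (fun z : ℝ => |z| ^ p) (mixtureCoord i q) + mu * ∑ S, q.2 S * F S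

theorem convex_mixtureDomain : Convex ℝ (mixtureDomain V) := by
  refine fun q hq r hr a b ha hb hab =>
    ⟨convex_stdSimplex ℝ _ hq.1 hr.1 ha hb hab, fun i => ?_⟩
  rw [map_add, map_smul, map_smul]
  exact convex_perspectiveDomain (hq.2 i) (hr.2 i) ha hb hab

theorem convexOn_mixtureCost (hp : 1 ≤ p) (hlam : 0 ≤ lam) :
    ConvexOn ℝ (mixtureDomain V) (mixtureCost F p lam mu) := by
  have hnorm : ConvexOn ℝ (mixtureDomain V) fun q =>
      ∑ i, perspective (fun z : ℝ => |z| ^ p) (mixtureCoord i q) :=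
    convexOn_sum _ convex_mixtureDomain fun i _ =>
      ((convexOn_perspective (f := fun z : ℝ => |z| ^ p) (convexOn_norm_rpow hp)).comp_linearMap
        (mixtureCoord i)).subset (fun q hq => hq.2 i) convex_mixtureDomain
  let setCost : (V → ℝ) × (Finset V → ℝ) →ₗ[ℝ] ℝ :=
    (mu • Fintype.linearCombination ℝ F) ∘ₗ LinearMap.snd ℝ _ _
  refine ((hnorm.smul hlam).add (setCost.convexOn convex_mixtureDomain)).congr fun q _ => ?_
  simp [mixtureCost, setCost, Fintype.linearCombination_apply]

theorem mul_sum_le_mixtureCost (hlam : 0 ≤ lam) {q : (V → ℝ) × (Finset V → ℝ)}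
    (hq : q ∈ mixtureDomain V) : mu * ∑ S, q.2 S * F S ≤ mixtureCost F p lam mu q :=
  le_add_of_nonneg_left <| mul_nonneg hlam <| Finset.sum_nonneg fun i _ =>
    mul_nonneg (hq.2 i).1 (by positivity)

theorem forall_le_objective_iff_forall_le_mixtureCost (hp : p ≠ 0) (hmu : 0 ≤ mu)
    {w : V → ℝ} {c : ℝ} :
    (∀ η : V → ℝ, (∀ i, 0 ≤ η i ∧ η i ≤ 1) → (∀ i, w i ≠ 0 → 0 < η i) →
      c ≤ lam * (∑ i ∈ Finset.univ.filter (fun i => w i ≠ 0), |w i| ^ p / η i ^ (p - 1)) +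
        mu * convClosure F η) ↔
    ∀ α, (w, α) ∈ mixtureDomain V → c ≤ mixtureCost F p lam mu (w, α) := by
  constructor
  · intro h α hα
    have hη : marginal α ∈ Set.Icc (0 : V → ℝ) 1 := by
      rw [← image_marginal_stdSimplex]
      exact Set.mem_image_of_mem _ hα.1
    have hw : ∀ i, w i ≠ 0 → 0 < marginal α i := fun i =>
      (mem_perspectiveDomain_iff.1 (hα.2 i)).2
    have hc := (le_add_mul_convClosure_iff hη hmu).1
      (h _ (fun i => ⟨hη.1 i, hη.2 i⟩) hw) α hα.1 rfl
    rwa [sum_filter_eq_sum_perspective hp hw] at hc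
  · intro h η hη hw
    rw [sum_filter_eq_sum_perspective hp hw,
      le_add_mul_convClosure_iff ⟨fun i => (hη i).1, fun i => (hη i).2⟩ hmu]
    rintro α hα rfl
    exact h α ⟨hα, fun i => mem_perspectiveDomain_iff.2 ⟨(hη i).1, hw i⟩⟩

theorem isGLB_thetaP (hp : p ≠ 0) (hlam : 0 ≤ lam) (hmu : 0 ≤ mu) (F : Finset V → ℝ)
    (w : V → ℝ) :
    IsGLB ((fun α => mixtureCost F p lam mu (w, α)) '' {α | (w, α) ∈ mixtureDomain V})
      (thetaP F p lam mu w) := by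
  obtain ⟨m, hm⟩ := exists_le_sum_mul_of_mem_stdSimplex F
  have hlower : ∀ α, (w, α) ∈ mixtureDomain V → mu * m ≤ mixtureCost F p lam mu (w, α) :=
    fun α hα => (mul_le_mul_of_nonneg_left (hm α hα.1) hmu).trans (mul_sum_le_mixtureCost hlam hα)
  refine (isGLB_congr (Set.ext fun c => ?_)).1 (isGLB_csInf ⟨_, 1, by simp, by simp, rfl⟩
    ⟨mu * m, ?_⟩)
  · rw [mem_lowerBounds, mem_lowerBounds, Set.forall_mem_image]
    refine Iff.trans ?_ (forall_le_objective_iff_forall_le_mixtureCost hp hmu)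
    constructor
    · exact fun h η hη hw => h _ ⟨η, hη, hw, rfl⟩
    · rintro h _ ⟨η, hη, hw, rfl⟩
      exact h η hη hw
  · rintro _ ⟨η, hη, hw, rfl⟩
    exact (forall_le_objective_iff_forall_le_mixtureCost hp hmu).2 hlower η hη hw

theorem convexOn_thetaP (hp : 1 ≤ p) (hlam : 0 ≤ lam) (hmu : 0 ≤ mu) :
    ConvexOn ℝ Set.univ (thetaP F p lam mu) :=
  convexOn_of_isGLB_fiber (convexOn_mixtureCost hp hlam)
    (isGLB_thetaP (zero_lt_one.trans_le hp).ne' hlam hmu F)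

theorem thetaP_le_of_support_subset (hp : p ≠ 0) (hlam : 0 ≤ lam) (hmu : 0 ≤ mu) {w : V → ℝ}
    {S : Finset V} (hS : ∀ i, w i ≠ 0 → i ∈ S) :
    thetaP F p lam mu w ≤ mu * F S + lam * ∑ i, |w i| ^ p := by
  have hw (i : V) (hi : i ∉ S) : w i = 0 := of_not_not fun h => hi (hS i h)
  refine (isGLB_thetaP hp hlam hmu F w).1 ⟨Pi.single S 1, ⟨single_mem_stdSimplex ℝ S, ?_⟩, ?_⟩
  · refine fun i => mem_perspectiveDomain_iff.2 ?_
    by_cases hi : i ∈ S <;> simp [mixtureCoord, marginal_single, hi, hw]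
  · have hpersp : ∀ i, perspective (fun z : ℝ => |z| ^ p) (mixtureCoord i (w, Pi.single S 1)) =
        |w i| ^ p := by
      intro i
      by_cases hi : i ∈ S
      · simp [perspective, mixtureCoord, marginal_single, hi]
      · simp [perspective, mixtureCoord, marginal_single, hi, hw i hi, Real.zero_rpow hp]
    simp [mixtureCost, hpersp, add_comm, Pi.single_apply]

theorem apply_marginal_mul_le_of_convexOn {g : (V → ℝ) → ℝ} (hp : 0 < p)
    (hg : ConvexOn ℝ Set.univ g)
    (hgF : ∀ w, g w ≤ mu * F (Finset.univ.filter fun i => w i ≠ 0) + lam * ∑ i, |w i| ^ p)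
    {α : Finset V → ℝ} (hα : α ∈ stdSimplex ℝ (Finset V)) (x : V → ℝ) :
    g (marginal α * x) ≤ lam * ∑ i, marginal α i * |x i| ^ p + mu * ∑ S, α S * F S := by
  have hcont : Continuous g := continuousOn_univ.1 (hg.continuousOn isOpen_univ)
  have hpow : Continuous fun w : V → ℝ => lam * ∑ i, |w i| ^ p := by
    have hp₀ : 0 ≤ p := hp.le
    fun_prop (disch := assumption)
  have hS (S : Finset V) : g (S.piecewise x 0) ≤ mu * F S + lam * ∑ i ∈ S, |x i| ^ p := by
    refine (apply_piecewise_le_of_le_add_support (c := fun S => mu * F S) hcont hpow hgF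
      S x).trans_eq ?_
    have habs (i : V) : |S.piecewise x 0 i| ^ p = if i ∈ S then |x i| ^ p else 0 := by
      by_cases hi : i ∈ S <;> simp [hi, Real.zero_rpow hp.ne']
    simp [habs]
  calc g (marginal α * x) = g (∑ S, α S • S.piecewise x 0) := by
        rw [marginal_mul_eq_sum_smul_piecewise]
    _ ≤ ∑ S, α S • g (S.piecewise x 0) :=
        hg.map_sum_le (fun S _ => hα.1 S) hα.2 fun _ _ => Set.mem_univ _
    _ ≤ ∑ S, α S * (mu * F S + lam * ∑ i ∈ S, |x i| ^ p) :=
        Finset.sum_le_sum fun S _ => mul_le_mul_of_nonneg_left (hS S) (hα.1 S)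
    _ = lam * ∑ i, marginal α i * |x i| ^ p + mu * ∑ S, α S * F S := by
        rw [← sum_mul_sum_eq_sum_marginal_mul, Finset.mul_sum, Finset.mul_sum,
          ← Finset.sum_add_distrib]
        exact Finset.sum_congr rfl fun S _ => by ring

theorem le_thetaP_of_convexOn {g : (V → ℝ) → ℝ} (hp : 0 < p) (hlam : 0 ≤ lam) (hmu : 0 ≤ mu)
    (hg : ConvexOn ℝ Set.univ g)
    (hgF : ∀ w, g w ≤ mu * F (Finset.univ.filter fun i => w i ≠ 0) + lam * ∑ i, |w i| ^ p)
    (w : V → ℝ) : g w ≤ thetaP F p lam mu w := by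
  refine (le_isGLB_iff (isGLB_thetaP hp.ne' hlam hmu F w)).2 ?_
  rintro _ ⟨α, ⟨hα, hw⟩, rfl⟩
  have hmean : marginal α * ((marginal α)⁻¹ * w) = w := by
    ext i
    exact smul_inv_smul_of_mem_perspectiveDomain (hw i)
  have hle := apply_marginal_mul_le_of_convexOn hp hg hgF hα ((marginal α)⁻¹ * w)
  rwa [hmean] at hle

end SetMixtures

theorem stmt_1_general {V : Type*} [Fintype V] [DecidableEq V]
    (p lam mu : ℝ) (hp : 1 ≤ p) (hlam : 0 ≤ lam) (hmu : 0 ≤ mu)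
    (F : Finset V → ℝ) (Fml : (V → ℝ) → ℝ)
    (hFml : ∀ w, Fml w = mu * F (Finset.univ.filter (fun i => w i ≠ 0))
        + lam * ∑ i : V, |w i| ^ p) :
    ConvexOn ℝ Set.univ (thetaP F p lam mu) ∧
    (∀ w : V → ℝ, thetaP F p lam mu w ≤ Fml w) ∧
    (∀ g : (V → ℝ) → ℝ, ConvexOn ℝ Set.univ g → (∀ w, g w ≤ Fml w) →
      ∀ w, g w ≤ thetaP F p lam mu w) := by
  obtain rfl : Fml = _ := funext hFml
  have hp₀ : 0 < p := zero_lt_one.trans_le hp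
  exact ⟨convexOn_thetaP hp hlam hmu,
    fun w => thetaP_le_of_support_subset hp₀.ne' hlam hmu (by simp),
    fun g hg hgF => le_thetaP_of_convexOn hp₀ hlam hmu hg hgF⟩

theorem stmt_1 {V : Type*} [Fintype V] [DecidableEq V]
    (p lam mu : ℝ) (hp : 1 < p) (hlam : 0 < lam) (hmu : 0 < mu)
    (F : Finset V → ℝ) (hF0 : F ∅ = 0) (hFnn : ∀ A : Finset V, 0 ≤ F A)
    (Fml : (V → ℝ) → ℝ)
    (hFml : ∀ w, Fml w = mu * F (Finset.univ.filter (fun i => w i ≠ 0))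
        + lam * ∑ i : V, |w i| ^ p) :
    ConvexOn ℝ Set.univ (thetaP F p lam mu) ∧
    (∀ w : V → ℝ, thetaP F p lam mu w ≤ Fml w) ∧
    (∀ g : (V → ℝ) → ℝ, ConvexOn ℝ Set.univ g → (∀ w, g w ≤ Fml w) →
      ∀ w, g w ≤ thetaP F p lam mu w) :=
  stmt_1_general p lam mu hp.le hlam.le hmu.le F Fml hFml
end

section
/- Let Φ : ℝ^V → ℝ be convex and monotone on the nonnegative orthant (0 ≤ u ≤ v coordinatewise implies Φ(u) ≤ Φ(v)), let α ∈ (0,1), and let w⁰ ∈ ℝ^V have all coordinates nonzero. Then for every w ∈ ℝ^V, Φ(|w|^α) ≤ (1−α) Φ(|w⁰|^α) + α Φ(|w⁰|^{α−1} ∘ |w|), where powers and the product ∘ are taken coordinatewise; moreover equality holds at w = w⁰. -/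
open scoped BigOperators

/-! Weighted AM-GM bounds `b ^ α` by its tangent at `a`, which is the convex combination
`(1 - α) * a ^ α + α * (a ^ (α - 1) * b)`. Applied in each coordinate, this bounds `|w| ^ α` by a
convex combination of two points of the orthant; `Φ` preserves the bound by monotonicity and splits
the combination by convexity. The tangent touches at `b = a`, whence the equality at `w = w⁰`. -/

section ConvexMonotone

variable {𝕜 E β : Type*} [Semiring 𝕜] [PartialOrder 𝕜] [AddCommMonoid E] [Preorder E] [SMul 𝕜 E]
  [AddCommMonoid β] [PartialOrder β] [SMul 𝕜 β]

theorem map_le_add_smul_of_le_add_smul {s : Set E} {f : E → β} (hconv : ConvexOn 𝕜 s f)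
    (hmono : MonotoneOn f s) {a b : 𝕜} (ha : 0 ≤ a) (hb : 0 ≤ b) (hab : a + b = 1) {x y z : E}
    (hx : x ∈ s) (hy : y ∈ s) (hz : z ∈ s) (hle : x ≤ a • y + b • z) :
    f x ≤ a • f y + b • f z :=
  (hmono hx (hconv.1 hy hz ha hb hab) hle).trans (hconv.2 hy hz ha hb hab)

end ConvexMonotone

section Rpow

variable {a b α : ℝ}

theorem rpow_sub_one_mul_self (ha : a ≠ 0) : a ^ (α - 1) * a = a ^ α := by
  rw [Real.rpow_sub_one ha, div_mul_cancel₀ _ ha]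

theorem rpow_mul_rpow_sub_one_mul_rpow (ha : 0 < a) (hb : 0 ≤ b) :
    (a ^ α) ^ (1 - α) * (a ^ (α - 1) * b) ^ α = b ^ α := by
  have hexp : α * (1 - α) + (α - 1) * α = 0 := by ring
  rw [Real.mul_rpow (by positivity) hb, ← Real.rpow_mul ha.le, ← Real.rpow_mul ha.le,
    ← mul_assoc, ← Real.rpow_add ha, hexp, Real.rpow_zero, one_mul]

theorem rpow_le_weighted_add (ha : 0 < a) (hb : 0 ≤ b) (hα : α ∈ Set.Icc (0 : ℝ) 1) :
    b ^ α ≤ (1 - α) * a ^ α + α * (a ^ (α - 1) * b) :=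
  calc b ^ α = (a ^ α) ^ (1 - α) * (a ^ (α - 1) * b) ^ α :=
        (rpow_mul_rpow_sub_one_mul_rpow ha hb).symm
    _ ≤ (1 - α) * a ^ α + α * (a ^ (α - 1) * b) :=
        Real.geom_mean_le_arith_mean2_weighted (sub_nonneg.2 hα.2) hα.1 (by positivity)
          (by positivity) (sub_add_cancel 1 α)

end Rpow

theorem stmt_7_general {V β : Type*} [AddCommMonoid β] [PartialOrder β] [Module ℝ β]
    {Φ : (V → ℝ) → β} (hconv : ConvexOn ℝ (Set.Ici 0) Φ) (hmono : MonotoneOn Φ (Set.Ici 0))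
    {α : ℝ} (hα : α ∈ Set.Icc (0 : ℝ) 1) {w0 : V → ℝ} (hw0 : ∀ i, w0 i ≠ 0) :
    (∀ w : V → ℝ,
      Φ (fun i => |w i| ^ α)
        ≤ (1 - α) • Φ (fun i => |w0 i| ^ α) + α • Φ (fun i => |w0 i| ^ (α - 1) * |w i|)) ∧
    Φ (fun i => |w0 i| ^ α)
      = (1 - α) • Φ (fun i => |w0 i| ^ α) + α • Φ (fun i => |w0 i| ^ (α - 1) * |w0 i|) := by
  have hpos (i : V) : 0 < |w0 i| := abs_pos.2 (hw0 i)
  refine ⟨fun w => ?_, ?_⟩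
  · have hmajorant : (fun i => |w i| ^ α) ≤
        (1 - α) • (fun i => |w0 i| ^ α) + α • fun i => |w0 i| ^ (α - 1) * |w i| :=
      fun i => rpow_le_weighted_add (hpos i) (abs_nonneg (w i)) hα
    exact map_le_add_smul_of_le_add_smul hconv hmono (sub_nonneg.2 hα.2) hα.1
      (sub_add_cancel 1 α) (fun i => by positivity) (fun i => by positivity)
      (fun i => by positivity) hmajorant
  · simp only [rpow_sub_one_mul_self (hpos _).ne']
    exact (Convex.combo_self (sub_add_cancel 1 α) _).symm

theorem stmt_7 {V : Type*} [Fintype V]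
    (Φ : (V → ℝ) → ℝ) (hΦ : ConvexOn ℝ Set.univ Φ)
    (hΦmono : ∀ u v : V → ℝ, (∀ i, 0 ≤ u i) → (∀ i, u i ≤ v i) → Φ u ≤ Φ v)
    (α : ℝ) (hα : α ∈ Set.Ioo (0:ℝ) 1)
    (w0 : V → ℝ) (hw0 : ∀ i, w0 i ≠ 0) :
    (∀ w : V → ℝ,
      Φ (fun i => |w i| ^ α)
        ≤ (1 - α) * Φ (fun i => |w0 i| ^ α) + α * Φ (fun i => |w0 i| ^ (α - 1) * |w i|)) ∧
    Φ (fun i => |w0 i| ^ α)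
      = (1 - α) * Φ (fun i => |w0 i| ^ α) + α * Φ (fun i => |w0 i| ^ (α - 1) * |w0 i|) :=
  stmt_7_general (hΦ.subset (Set.subset_univ _) (convex_Ici 0))
    (fun u hu v _ huv => hΦmono u v hu huv) (Set.Ioo_subset_Icc_self hα) hw0
end
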